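/- Let (W, S) be a Coxeter system, B⁺ its Artin–Tits monoid, and I ⊆ S. If two elements x, y ∈ B_I⁺ have a common right multiple in B⁺, then they have a common right multiple lying in B_I⁺; moreover every right lcm of x and y in B⁺ lies in B_I⁺. -/

import Mathlib

/-- The alternating word `s t s t ⋯` of length `m`, starting with `s`. -/
def altWord {B : Type*} (s t : B) : ℕ → List B
  | 0 => []
  | n + 1 => s :: altWord t s n

/-- The braid congruence on the free monoid over `B` associated to a Coxeter matrix `M`:
the congruence generated by the braid relations, identifying the alternating words
`s t s ⋯` and `t s t ⋯` of length `M s t` whenever `s ≠ t` and `M s t < ∞`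
(infinity being encoded by the entry `0`). -/
def braidCon {B : Type*} (M : CoxeterMatrix B) : Con (FreeMonoid B) :=
  conGen (fun a b => ∃ s t : B, s ≠ t ∧ M s t ≠ 0 ∧
    a = FreeMonoid.ofList (altWord s t (M s t)) ∧
    b = FreeMonoid.ofList (altWord t s (M s t)))

/-- The Artin–Tits monoid of a Coxeter matrix `M`: the quotient of the free monoid
on `B` by the braid relations. -/
def ArtinTitsMonoid {B : Type*} (M : CoxeterMatrix B) : Type _ :=
  (braidCon M).Quotient

instance {B : Type*} (M : CoxeterMatrix B) : Monoid (ArtinTitsMonoid M) :=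
  inferInstanceAs (Monoid (braidCon M).Quotient)

/-- The image in the Artin–Tits monoid of a generator. -/
def ArtinTitsMonoid.of {B : Type*} (M : CoxeterMatrix B) (s : B) : ArtinTitsMonoid M :=
  (braidCon M).mk' (FreeMonoid.of s)

namespace AT
open Polynomial.Chebyshev

noncomputable def kf {B : Type*} (M : CoxeterMatrix B) (i j : B) : ℝ :=
  -2 * Real.cos (Real.pi / (M i j : ℝ))

noncomputable def gf {B : Type*} (M : CoxeterMatrix B) (i : B) : Module.Dual ℝ (B →₀ ℝ) :=
  Finsupp.linearCombination ℝ (kf M i)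

theorem gf_single {B : Type*} (M : CoxeterMatrix B) (i j : B) :
    gf M i (Finsupp.single j 1) = kf M i j := by
  simp [gf]

theorem gf_self {B : Type*} (M : CoxeterMatrix B) (i : B) :
    gf M i (Finsupp.single i 1) = 2 := by
  rw [gf_single]; simp [kf]

theorem kf_symm {B : Type*} (M : CoxeterMatrix B) (i j : B) : kf M i j = kf M j i := by
  simp [kf, M.symmetric i j]

noncomputable def gr {B : Type*} (M : CoxeterMatrix B) (i : B) : (B →₀ ℝ) ≃ₗ[ℝ] (B →₀ ℝ) :=
  Module.reflection (gf_self M i)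

theorem kf_t {B : Type*} (M : CoxeterMatrix B) (i j : B) :
    2 * Real.cos (2 * (Real.pi / (M i j : ℝ))) =
     gf M i (Finsupp.single j 1) * gf M j (Finsupp.single i 1) - 2 := by
  rw [gf_single, gf_single, kf_symm M j i, kf, Real.cos_two_mul]; ring

theorem sin_ne {m : ℕ} (hm : 3 ≤ m) : Real.sin (2 * (Real.pi / (m : ℝ))) ≠ 0 := by
  have h3 : (3 : ℝ) ≤ m := by exact_mod_cast hm
  have hp := Real.pi_pos
  apply ne_of_gt
  apply Real.sin_pos_of_pos_of_lt_pi
  · positivity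
  · rw [← mul_div_assoc, div_lt_iff₀ (by linarith)]; nlinarith

theorem gr_liftable {B : Type*} (M : CoxeterMatrix B) : M.IsLiftable (gr M) := by
  intro i j
  ext1 z
  rcases eq_or_ne i j with rfl | hij
  · rw [M.diagonal]
    simp [gr]
    exact Module.involutive_reflection _ z
  have h1 := M.off_diagonal i j hij
  have hF := Module.reflection_mul_reflection_pow_apply (gf_self M i) (gf_self M j) (M i j) z _ (kf_t M i j)
  change ((Module.reflection (gf_self M i) * Module.reflection (gf_self M j)) ^ (M i j)) z = z
  rw [hF]
  rcases Nat.lt_or_ge (M i j) 3 with h3 | h3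
  · obtain h0 | h2 : M i j = 0 ∨ M i j = 2 := by omega
    · rw [h0]; simp
    · have e1 : kf M i j = 0 := by simp [kf, h2]
      have e2 : kf M j i = 0 := by rw [kf_symm]; exact e1
      rw [gf_single, gf_single, e1, e2, h2]
      have e3 : (2 * Real.cos (2 * (Real.pi / ((2 : ℕ) : ℝ)))) = -2 := by
        rw [show (2 * (Real.pi / ((2 : ℕ) : ℝ))) = Real.pi by push_cast; ring]; simp
      rw [e3]
      norm_num
      module
  · set θ := 2 * (Real.pi / (M i j : ℝ)) with hθ
    have hs : Real.sin θ ≠ 0 := sin_ne h3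
    have hS : ∀ n : ℤ, (S ℝ n).eval (2 * Real.cos θ) = Real.sin ((n + 1) * θ) / Real.sin θ := by
      intro n
      rw [eq_div_iff hs]; exact S_two_mul_real_cos θ n
    have hm0 : (M i j : ℝ) ≠ 0 := by positivity
    have hmθ : (M i j : ℝ) * θ = 2 * Real.pi := by rw [hθ]; field_simp
    rcases Nat.even_or_odd' (M i j) with ⟨k, hk | hk⟩
    · have a1 : (((M i j : ℕ) : ℤ) - 2) / 2 = (k : ℤ) - 1 := by omega
      have a2 : (((M i j : ℕ) : ℤ) - 1) / 2 = (k : ℤ) - 1 := by omega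
      have hz : (S ℝ ((k : ℤ) - 1)).eval (2 * Real.cos θ) = 0 := by
        rw [hS]
        have : (k : ℝ) * θ = Real.pi := by
          rw [hk] at hmθ; push_cast at hmθ; linarith
        push_cast
        rw [sub_add_cancel, this]; simp
      rw [a1, a2, hz]; simp
    · have a1 : (((M i j : ℕ) : ℤ) - 2) / 2 = (k : ℤ) - 1 := by omega
      have a2 : (((M i j : ℕ) : ℤ) - 1) / 2 = (k : ℤ) := by omega
      have a3 : (((M i j : ℕ) : ℤ) - 3) / 2 = (k : ℤ) - 1 := by omega
      have a4 : (((M i j : ℕ) : ℤ)) / 2 = (k : ℤ) := by omega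
      have hz : (S ℝ (k : ℤ)).eval (2 * Real.cos θ) + (S ℝ ((k : ℤ) - 1)).eval (2 * Real.cos θ) = 0 := by
        rw [hS, hS]
        have : ((k : ℝ) + 1) * θ = 2 * Real.pi - k * θ := by
          rw [hk] at hmθ; push_cast at hmθ; linarith
        push_cast
        rw [sub_add_cancel, this, Real.sin_two_pi_sub]; ring
      rw [a1, a2, a3, a4, hz]; simp

theorem order_gr {B : Type*} (M : CoxeterMatrix B) (i j : B) (hij : i ≠ j) (n : ℕ)
    (h : (gr M i * gr M j) ^ n = 1) : M i j ∣ n := by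
  have h1 := M.off_diagonal i j hij
  have hF := Module.reflection_mul_reflection_pow_apply_self (gf_self M i) (gf_self M j) n _ (kf_t M i j)
  change ((gr M i * gr M j) ^ n) _ = _ at hF
  rw [h, gf_single M j i] at hF
  have c1 := DFunLike.congr_fun hF i
  have c2 := DFunLike.congr_fun hF j
  simp [hij, hij.symm] at c1 c2
  rcases Nat.lt_or_ge (M i j) 3 with h3 | h3
  · obtain h0 | h2 : M i j = 0 ∨ M i j = 2 := by omega
    · have e2 : kf M j i = -2 := by rw [kf_symm]; simp [kf, h0]
      rw [e2, h0] at c2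
      norm_num [S_eval_two] at c2
      simp [h0, c2]
    · have e3 : (2 * Real.cos (2 * (Real.pi / ((2 : ℕ) : ℝ)))) = -2 := by
        rw [show (2 * (Real.pi / ((2 : ℕ) : ℝ))) = Real.pi by push_cast; ring]; simp
      rw [h2, e3, S_eval_neg_two, S_eval_neg_two] at c1
      rw [h2]
      by_contra hn
      have ho : Odd n := by
        rw [← Nat.not_even_iff_odd]; exact fun he => hn he.two_dvd
      have ho' : Odd (n : ℤ) := by exact_mod_cast ho
      have he' : Even ((n : ℤ) - 1) := ho'.sub_odd odd_one
      rw [Int.negOnePow_odd _ ho', Int.negOnePow_even _ he'] at c1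
      norm_num at c1
  · have hs : Real.sin (2 * (Real.pi / (M i j : ℝ))) ≠ 0 := sin_ne h3
    have hk : kf M j i ≠ 0 := by
      rw [kf_symm, kf]
      rw [Real.sin_two_mul] at hs
      intro h0
      apply hs
      have : Real.cos (Real.pi / (M i j : ℝ)) = 0 := by linarith
      rw [this]; ring
    set θ := 2 * (Real.pi / (M i j : ℝ)) with hθ
    have hS : ∀ n : ℤ, (S ℝ n).eval (2 * Real.cos θ) = Real.sin ((n + 1) * θ) / Real.sin θ := by
      intro n
      rw [eq_div_iff hs]; exact S_two_mul_real_cos θ n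
    have hm0 : (M i j : ℝ) ≠ 0 := by positivity
    have c3 := c2.resolve_right hk
    rw [c3, add_zero, hS, eq_div_iff hs] at c1
    rw [hS] at c3
    push_cast at c1 c3
    rw [sub_add_cancel] at c3
    have c4 : Real.sin (n * θ) = 0 := by simpa [hs] using c3
    rw [add_mul, Real.sin_add, c4] at c1
    have c5 : Real.cos (n * θ) = 1 := by
      have : (Real.cos (n * θ) - 1) * Real.sin θ = 0 := by
        simp at c1; linarith
      rcases mul_eq_zero.1 this with h | h
      · linarith
      · exact absurd h hs
    rw [Real.cos_eq_one_iff] at c5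
    obtain ⟨k, hk⟩ := c5
    have : (n : ℝ) = k * M i j := by
      rw [hθ] at hk
      field_simp at hk
      have := Real.pi_pos
      nlinarith
    have h' : (n : ℤ) = k * (M i j : ℕ) := by exact_mod_cast this
    exact Int.natCast_dvd_natCast.1 ⟨k, by rw [h', mul_comm]⟩

theorem dvd_of_pow {B : Type*} {M : CoxeterMatrix B} {W : Type*} [Group W] (cs : CoxeterSystem M W)
    (i j : B) (hij : i ≠ j) (n : ℕ) (h : (cs.simple i * cs.simple j) ^ n = 1) : M i j ∣ n := by
  apply order_gr M i j hij
  have := congrArg (cs.lift ⟨gr M, gr_liftable M⟩) h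
  simpa [cs.lift_apply_simple (gr_liftable M)] using this

theorem simple_inj {B : Type*} {M : CoxeterMatrix B} {W : Type*} [Group W] (cs : CoxeterSystem M W)
    {i j : B} (h : cs.simple i = cs.simple j) : i = j := by
  by_contra hij
  have := dvd_of_pow cs i j hij 1 (by rw [h]; simp)
  exact M.off_diagonal i j hij (Nat.dvd_one.1 this)

end AT

namespace AT
section exchange
variable {B : Type*} {M : CoxeterMatrix B} {W : Type*} [Group W] (cs : CoxeterSystem M W)

open Classical in
noncomputable def ex (i : B) : Function.End (W × ZMod 2) := fun p =>
  (cs.simple i * p.1 * cs.simple i, p.2 + if p.1 = cs.simple i then 1 else 0)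

theorem conj_flip (i j : B) (k : ℕ) :
    cs.simple j * (cs.simple i * cs.simple j) ^ k =
      ((cs.simple i * cs.simple j) ^ k)⁻¹ * cs.simple j := by
  induction k with
  | zero => simp
  | succ k ih =>
    rw [pow_succ, ← mul_assoc, ih, mul_inv_rev]
    have : cs.simple j * (cs.simple i * cs.simple j) = (cs.simple i * cs.simple j)⁻¹ * cs.simple j := by
      simp [mul_assoc]
    rw [mul_assoc, this]
    rw [← mul_assoc, ← mul_inv_rev, ← mul_inv_rev, ← pow_succ, ← pow_succ']

open Classical in
theorem ex_pow (i j : B) (n : ℕ) (p : W × ZMod 2) :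
    ((ex cs i * ex cs j) ^ n) p =
      ((cs.simple i * cs.simple j) ^ n * p.1 * ((cs.simple i * cs.simple j) ^ n)⁻¹,
        p.2 + ∑ l ∈ Finset.range (2 * n),
          if p.1 = ((cs.simple i * cs.simple j) ^ l)⁻¹ * cs.simple j then 1 else 0) := by
  induction n with
  | zero => simp; rfl
  | succ n ih =>
    rw [pow_succ']
    change ex cs i (ex cs j (((ex cs i * ex cs j) ^ n) p)) = _
    rw [ih, show 2 * (n + 1) = 2 * n + 1 + 1 by ring, Finset.sum_range_succ, Finset.sum_range_succ]
    have hf := conj_flip cs i j n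
    generalize hc : (cs.simple i * cs.simple j) ^ n = c at *
    have h2 : (cs.simple i * cs.simple j) ^ (2 * n) = c * c := by rw [← hc, ← pow_add, two_mul]
    have h3 : (cs.simple i * cs.simple j) ^ (2 * n + 1) = cs.simple i * cs.simple j * (c * c) := by
      rw [pow_succ', h2]
    have h4 : (cs.simple i * cs.simple j) ^ (n + 1) = cs.simple i * cs.simple j * c := by
      rw [pow_succ', hc]
    have e1 : (c * p.1 * c⁻¹ = cs.simple j) ↔ p.1 = (c * c)⁻¹ * cs.simple j := by
      rw [mul_inv_rev, mul_assoc c⁻¹, ← hf, mul_inv_eq_iff_eq_mul, ← eq_inv_mul_iff_mul_eq]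
    have e2 : (cs.simple j * (c * p.1 * c⁻¹) * cs.simple j = cs.simple i) ↔
        p.1 = (cs.simple i * cs.simple j * (c * c))⁻¹ * cs.simple j := by
      have : (cs.simple i * cs.simple j * (c * c))⁻¹ * cs.simple j
         = c⁻¹ * (cs.simple j * cs.simple i * cs.simple j) * c := by
        have h5 : c⁻¹ * (cs.simple j * cs.simple i) = cs.simple j * cs.simple i * c⁻¹ := by
          have h6 : cs.simple j * cs.simple i = (cs.simple i * cs.simple j)⁻¹ := by simp
          rw [h6, ← hc, ← mul_inv_rev, ← mul_inv_rev, ← pow_succ, ← pow_succ']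
        rw [mul_assoc c⁻¹, mul_assoc (cs.simple j * cs.simple i), hf, mul_inv_rev, mul_inv_rev,
          mul_inv_rev, cs.inv_simple, cs.inv_simple]
        rw [mul_assoc c⁻¹ c⁻¹, h5]
        simp only [mul_assoc]
      rw [this, ← eq_mul_inv_iff_mul_eq, ← eq_inv_mul_iff_mul_eq, mul_inv_eq_iff_eq_mul,
        ← eq_inv_mul_iff_mul_eq, cs.inv_simple]
      simp only [mul_assoc]
    simp only [ex, h2, h3, h4, e1, e2]
    refine Prod.ext ?_ ?_
    · simp [mul_assoc]
    · simp only [add_assoc]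

theorem ex_liftable : M.IsLiftable (ex cs) := by
  classical
  intro i j
  funext p
  rw [ex_pow]
  have h1 := cs.simple_mul_simple_pow i j
  change _ = p
  refine Prod.ext ?_ ?_
  · rw [h1]; simp
  · rw [two_mul, Finset.sum_range_add]
    simp only [pow_add, h1, one_mul]
    rw [CharTwo.add_self_eq_zero, add_zero]

open Classical in
theorem ex_word (ω : List B) (p : W × ZMod 2) :
    (cs.lift ⟨ex cs, ex_liftable cs⟩ (cs.wordProd ω)) p =
      (cs.wordProd ω * p.1 * (cs.wordProd ω)⁻¹, p.2 + ((cs.rightInvSeq ω).count p.1 : ℕ)) := by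
  induction ω with
  | nil => simp; rfl
  | cons i ω ih =>
    rw [cs.wordProd_cons, map_mul, cs.lift_apply_simple]
    change ex cs i (cs.lift ⟨ex cs, ex_liftable cs⟩ (cs.wordProd ω) p) = _
    rw [ih, CoxeterSystem.rightInvSeq, List.count_cons]
    simp only [ex]
    refine Prod.ext ?_ ?_
    · simp [mul_assoc]
    · have : (cs.wordProd ω * p.1 * (cs.wordProd ω)⁻¹ = cs.simple i) ↔
        ((cs.wordProd ω)⁻¹ * cs.simple i * cs.wordProd ω = p.1) := by
        rw [mul_inv_eq_iff_eq_mul, ← eq_inv_mul_iff_mul_eq, eq_comm, mul_assoc]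
      simp only [this, beq_iff_eq]
      push_cast
      rw [add_assoc]

/-- The exchange condition. -/
theorem exchange (ω : List B) (i : B)
    (h : cs.length (cs.wordProd ω * cs.simple i) < cs.length (cs.wordProd ω)) :
    ∃ ω₁ j ω₂, ω = ω₁ ++ j :: ω₂ ∧
      cs.wordProd ω * cs.simple i = cs.wordProd ω₁ * cs.wordProd ω₂ := by
  classical
  obtain ⟨τ, hτ, hτ'⟩ := cs.exists_isReduced (cs.wordProd ω * cs.simple i)
  have hw : cs.wordProd (τ.concat i) = cs.wordProd ω := by
    rw [cs.wordProd_concat, ← hτ']; simp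
  have hred : cs.IsReduced (τ.concat i) := by
    have h1 := cs.length_wordProd_le (τ.concat i)
    unfold CoxeterSystem.IsReduced at hτ ⊢
    rw [hw] at h1 ⊢
    rw [hτ', hτ] at h
    simp at h1 ⊢
    omega
  have h1 := congrArg Prod.snd (ex_word cs (τ.concat i) (cs.simple i, 0))
  have h2 := congrArg Prod.snd (ex_word cs ω (cs.simple i, 0))
  rw [hw, h2] at h1
  have h3 : (cs.rightInvSeq (τ.concat i)).count (cs.simple i) = 1 := by
    apply List.count_eq_one_of_mem hred.nodup_rightInvSeq
    rw [cs.rightInvSeq_concat]; simp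
  simp only [h3] at h1
  have h4 : cs.simple i ∈ cs.rightInvSeq ω := by
    by_contra hn
    rw [List.count_eq_zero_of_not_mem hn] at h1
    simp at h1
  obtain ⟨k, hk, hk'⟩ := List.getElem_of_mem h4
  have h5 := cs.wordProd_mul_getD_rightInvSeq ω k
  rw [List.getD_eq_getElem _ _ hk, hk'] at h5
  rw [cs.length_rightInvSeq] at hk
  refine ⟨ω.take k, ω[k], ω.drop (k+1), by simp, ?_⟩
  rw [h5, List.eraseIdx_eq_take_drop_succ, cs.wordProd_append]

end exchange
end AT

namespace AT
section main
variable {B : Type*} {M : CoxeterMatrix B} {W : Type*} [Group W] (cs : CoxeterSystem M W)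

def JW (J : Set B) (d : W) : Prop := ∃ L : List B, (∀ r ∈ L, r ∈ J) ∧ cs.wordProd L = d

theorem JW.mul {J : Set B} {d e : W} (hd : JW cs J d) (he : JW cs J e) : JW cs J (d * e) := by
  obtain ⟨L, hL, rfl⟩ := hd
  obtain ⟨K, hK, rfl⟩ := he
  refine ⟨L ++ K, ?_, cs.wordProd_append _ _⟩
  intro r hr
  rcases List.mem_append.1 hr with h | h
  · exact hL r h
  · exact hK r h

theorem JW.inv {J : Set B} {d : W} (hd : JW cs J d) : JW cs J d⁻¹ := by
  obtain ⟨L, hL, rfl⟩ := hd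
  exact ⟨L.reverse, fun r hr => hL r (List.mem_reverse.1 hr), cs.wordProd_reverse L⟩

theorem JW.simple {J : Set B} {r : B} (hr : r ∈ J) : JW cs J (cs.simple r) :=
  ⟨[r], by simpa using hr, by simp⟩

theorem JW.one {J : Set B} : JW cs J (1 : W) := ⟨[], by simp, by simp⟩

/-- additivity of lengths over a minimal coset representative -/
theorem len_add (J : Set B) (v : W) (hv : ∀ d, JW cs J d → cs.length v ≤ cs.length (v * d))
    (L : List B) (hL : ∀ r ∈ L, r ∈ J) :
    ∃ L' : List B, (∀ r ∈ L', r ∈ J) ∧ cs.wordProd L' = cs.wordProd L ∧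
      cs.length (v * cs.wordProd L) = cs.length v + L'.length := by
  induction L using List.reverseRecOn with
  | nil => exact ⟨[], by simp, rfl, by simp⟩
  | append_singleton L r ih =>
    obtain ⟨L', hL', he, hl⟩ := ih (fun x hx => hL x (by simp [hx]))
    have hr : r ∈ J := hL r (by simp)
    rw [cs.wordProd_append, cs.wordProd_singleton, ← mul_assoc]
    rcases cs.length_mul_simple (v * cs.wordProd L) r with h | h
    · refine ⟨L' ++ [r], ?_, ?_, ?_⟩
      · intro x hx
        rcases List.mem_append.1 hx with h | h
        · exact hL' x h
        · rw [List.mem_singleton.1 h]; exact hr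
      · rw [cs.wordProd_append, he]; simp
      · rw [h, hl]; simp; ring
    · obtain ⟨τ, hτ, hτ'⟩ := cs.exists_isReduced v
      have hvL : cs.wordProd (τ ++ L') = v * cs.wordProd L := by
        rw [cs.wordProd_append, he, ← hτ']
      obtain ⟨ω₁, j, ω₂, h1, h2⟩ := exchange cs (τ ++ L') r (by rw [hvL]; omega)
      rw [hvL] at h2
      rw [List.append_eq_append_iff] at h1
      rcases h1 with ⟨as, h3, h4⟩ | ⟨bs, h3, h4⟩
      · -- deleted letter lies in the second part
        subst h3
        refine ⟨as ++ ω₂, ?_, ?_, ?_⟩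
        · intro x hx
          apply hL' x
          rw [h4]
          rcases List.mem_append.1 hx with h | h <;> simp [h]
        · rw [cs.wordProd_append] at h2 ⊢
          rw [← hτ', mul_assoc, mul_assoc, mul_left_cancel_iff] at h2
          exact h2.symm
        · rw [h4] at hl
          simp at hl ⊢
          omega
      · cases bs with
        | nil =>
          simp at h4 h3
          subst h3
          refine ⟨ω₂, ?_, ?_, ?_⟩
          · intro x hx
            apply hL' x
            rw [← h4]; simp [hx]
          · rw [← hτ', mul_assoc, mul_left_cancel_iff] at h2
            exact h2.symm
          · rw [← h4] at hl
            simp at hl ⊢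
            omega
        | cons b bs =>
          exfalso
          simp at h4
          obtain ⟨h5, h6⟩ := h4
          subst h5 h6
          rw [cs.wordProd_append] at h2
          have hd : JW cs J (cs.wordProd L * cs.simple r * (cs.wordProd L)⁻¹) := by
            have : JW cs J (cs.wordProd L) := ⟨L', hL', he⟩
            exact ((this.mul cs (JW.simple cs hr)).mul cs (this.inv cs))
          have h7 := hv _ hd
          have h8 : v * (cs.wordProd L * cs.simple r * (cs.wordProd L)⁻¹) = cs.wordProd (ω₁ ++ bs) := by
            rw [← mul_assoc, ← mul_assoc, h2, he, cs.wordProd_append]; group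
          rw [h8] at h7
          have h9 := cs.length_wordProd_le (ω₁ ++ bs)
          rw [hτ', hτ, h3] at h7
          simp at h7 h9
          omega

def Xmin (I : Set B) (w : W) : Prop := ∀ a ∈ I, cs.length w < cs.length (cs.simple a * w)

theorem deodhar (I : Set B) (w : W) (hw : Xmin cs I w) (r : B) :
    Xmin cs I (w * cs.simple r) ∨ ∃ a ∈ I, w * cs.simple r = cs.simple a * w := by
  by_contra hc
  push Not at hc
  obtain ⟨h1, h2⟩ := hc
  apply h1
  intro a ha
  by_contra h3
  have h4 := hw a ha
  have h5 := cs.length_simple_mul w a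
  have h6 := cs.length_simple_mul (w * cs.simple r) a
  have h7 := cs.length_mul_simple w r
  have h8 := cs.length_mul_simple (cs.simple a * w) r
  rw [mul_assoc] at h8
  obtain ⟨τ, hτ, hτ'⟩ := cs.exists_isReduced w
  have h9 : cs.wordProd (a :: τ) = cs.simple a * w := by rw [cs.wordProd_cons, ← hτ']
  obtain ⟨ω₁, j, ω₂, h10, h11⟩ := exchange cs (a :: τ) r (by rw [h9, mul_assoc]; omega)
  rw [h9, mul_assoc] at h11
  cases ω₁ with
  | nil =>
    simp at h10 h11
    obtain ⟨h12, h13⟩ := h10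
    rw [← h13, ← hτ'] at h11
    apply h2 a ha
    nth_rw 2 [← h11]
    simp
  | cons b ω₁ =>
    simp at h10
    obtain ⟨h12, h13⟩ := h10
    subst h12
    rw [cs.wordProd_cons, mul_assoc, mul_left_cancel_iff, ← cs.wordProd_append] at h11
    have h14 := cs.length_wordProd_le (ω₁ ++ ω₂)
    rw [← h11] at h14
    have hlw : cs.length w = τ.length := by
      rw [hτ']
      exact hτ
    rw [h13] at hlw
    simp only [List.length_append, List.length_cons] at hlw h14
    omega

open Classical in
noncomputable def nxt (I : Set B) (w : W) (r : B) : W :=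
  if ∃ a ∈ I, w * cs.simple r = cs.simple a * w then w else w * cs.simple r

open Classical in
noncomputable def out (I : Set B) (w : W) (r : B) : List B :=
  if h : ∃ a ∈ I, w * cs.simple r = cs.simple a * w then [h.choose] else []

noncomputable def fin (I : Set B) : List B → W → W
  | [], w => w
  | r :: L, w => fin I L (nxt cs I w r)

noncomputable def outs (I : Set B) : List B → W → List B
  | [], _ => []
  | r :: L, w => out cs I w r ++ outs I L (nxt cs I w r)

theorem step_out (I : Set B) (w : W) (r a : B) (ha : a ∈ I)
    (h : w * cs.simple r = cs.simple a * w) : nxt cs I w r = w ∧ out cs I w r = [a] := by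
  have hex : ∃ a ∈ I, w * cs.simple r = cs.simple a * w := ⟨a, ha, h⟩
  refine ⟨by simp only [nxt, if_pos hex], ?_⟩
  rw [out, dif_pos hex]
  congr 1
  have := hex.choose_spec.2
  exact (simple_inj cs (mul_right_cancel (h.symm.trans this))).symm

theorem step_no (I : Set B) (w : W) (r : B)
    (h : ¬ ∃ a ∈ I, w * cs.simple r = cs.simple a * w) :
    nxt cs I w r = w * cs.simple r ∧ out cs I w r = [] := by
  simp only [nxt, out, if_neg h, dif_neg h, and_self]

theorem nxt_X (I : Set B) (w : W) (r : B) (hw : Xmin cs I w) : Xmin cs I (nxt cs I w r) := by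
  by_cases h : ∃ a ∈ I, w * cs.simple r = cs.simple a * w
  · obtain ⟨a, ha, h⟩ := h
    rw [(step_out cs I w r a ha h).1]; exact hw
  · rw [(step_no cs I w r h).1]
    exact (deodhar cs I w hw r).resolve_right h

theorem fin_X (I : Set B) (L : List B) (w : W) (hw : Xmin cs I w) : Xmin cs I (fin cs I L w) := by
  induction L generalizing w with
  | nil => exact hw
  | cons r L ih => exact ih _ (nxt_X cs I w r hw)

theorem fin_append (I : Set B) (L K : List B) (w : W) :
    fin cs I (L ++ K) w = fin cs I K (fin cs I L w) := by
  induction L generalizing w with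
  | nil => rfl
  | cons r L ih => exact ih _

theorem outs_append (I : Set B) (L K : List B) (w : W) :
    outs cs I (L ++ K) w = outs cs I L w ++ outs cs I K (fin cs I L w) := by
  induction L generalizing w with
  | nil => rfl
  | cons r L ih => simp only [List.cons_append, outs, fin, ih, List.append_assoc]

theorem outs_mem (I : Set B) (L : List B) (w : W) : ∀ a ∈ outs cs I L w, a ∈ I := by
  induction L generalizing w with
  | nil => simp [outs]
  | cons r L ih =>
    intro a ha
    rw [outs, List.mem_append] at ha
    rcases ha with ha | ha
    · by_cases h : ∃ a ∈ I, w * cs.simple r = cs.simple a * w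
      · obtain ⟨b, hb, h⟩ := h
        rw [(step_out cs I w r b hb h).2] at ha
        rw [List.mem_singleton.1 ha]; exact hb
      · rw [(step_no cs I w r h).2] at ha
        simp at ha
    · exact ih _ a ha

theorem fin_outs (I : Set B) (L : List B) (w : W) :
    w * cs.wordProd L = cs.wordProd (outs cs I L w) * fin cs I L w := by
  induction L generalizing w with
  | nil => simp [outs, fin]
  | cons r L ih =>
    rw [outs, fin, cs.wordProd_append, mul_assoc, ← ih, cs.wordProd_cons]
    by_cases h : ∃ a ∈ I, w * cs.simple r = cs.simple a * w
    · obtain ⟨b, hb, h⟩ := h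
      rw [(step_out cs I w r b hb h).2, (step_out cs I w r b hb h).1]
      rw [← mul_assoc, h]; simp [mul_assoc]
    · rw [(step_no cs I w r h).2, (step_no cs I w r h).1]
      simp [mul_assoc]

/-- words in `I` starting at `1` are output verbatim -/
theorem run_one (I : Set B) (L : List B) (hL : ∀ a ∈ L, a ∈ I) :
    fin cs I L 1 = 1 ∧ outs cs I L 1 = L := by
  induction L with
  | nil => exact ⟨rfl, rfl⟩
  | cons r L ih =>
    have h := step_out cs I 1 r r (hL r (by simp)) (by simp)
    have h2 := ih (fun a ha => hL a (by simp [ha]))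
    rw [fin, outs, h.1, h.2, h2.1, h2.2]
    exact ⟨rfl, rfl⟩

theorem Xmin_one (I : Set B) : Xmin cs I 1 := by
  intro a _; simp

theorem lis_alt (s t : B) (n : ℕ) : cs.leftInvSeq (altWord s t n) =
    (List.range n).map (fun k => (cs.simple s * cs.simple t) ^ k * cs.simple s) := by
  induction n generalizing s t with
  | zero => rfl
  | succ n ih =>
    rw [altWord, CoxeterSystem.leftInvSeq, ih, List.range_succ_eq_map]
    simp only [List.map_cons, List.map_map, pow_zero, one_mul]
    congr 1
    apply List.map_congr_left
    intro k _
    simp only [Function.comp, MulAut.conj_apply, cs.inv_simple]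
    have h : ∀ k : ℕ, cs.simple s * (cs.simple t * cs.simple s) ^ k =
        (cs.simple s * cs.simple t) ^ k * cs.simple s := by
      intro k
      induction k with
      | zero => simp
      | succ k ih =>
        rw [pow_succ, ← mul_assoc, ih, pow_succ]
        simp only [mul_assoc]
    rw [← mul_assoc, h, pow_succ]
    simp only [mul_assoc]

theorem lis_alt_perm (s t : B) :
    (cs.leftInvSeq (altWord s t (M s t))).Perm (cs.leftInvSeq (altWord t s (M s t))) := by
  have : cs.leftInvSeq (altWord t s (M s t)) = (cs.leftInvSeq (altWord s t (M s t))).reverse := by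
    rw [lis_alt, lis_alt, ← List.map_reverse]
    apply List.ext_getElem
    · simp
    · intro k h1 h2
      simp at h1 h2
      simp
      have hp := cs.simple_mul_simple_pow s t
      have hinv : cs.simple t * cs.simple s = (cs.simple s * cs.simple t)⁻¹ := by simp
      have ht : cs.simple t = (cs.simple s * cs.simple t)⁻¹ * cs.simple s := by simp [mul_assoc]
      have hk : (cs.simple s * cs.simple t) ^ (M s t - 1 - k) =
          ((cs.simple s * cs.simple t) ^ (k + 1))⁻¹ := by
        rw [eq_inv_iff_mul_eq_one, ← pow_add, show M s t - 1 - k + (k + 1) = M s t by omega, hp]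
      rw [hk, hinv]
      nth_rw 2 [ht]
      rw [← mul_assoc, ← pow_succ, inv_pow]
  rw [this]
  exact (List.reverse_perm _).symm

theorem alt_mem (s t : B) (n : ℕ) : ∀ r ∈ altWord s t n, r = s ∨ r = t := by
  induction n generalizing s t with
  | zero => simp [altWord]
  | succ n ih =>
    intro r hr
    rw [altWord, List.mem_cons] at hr
    rcases hr with h | h
    · exact Or.inl h
    · exact (ih t s r h).symm

/-- Runs where every output equals `a`. -/
theorem run_single (I J : Set B) (v : W) (a : B) (ha : a ∈ I)
    (H : ∀ d, JW cs J d → ∀ r ∈ J, ∀ b ∈ I,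
      v * d * cs.simple r = cs.simple b * (v * d) → b = a)
    (L : List B) (hL : ∀ r ∈ L, r ∈ J) (d : W) (hd : JW cs J d) :
    outs cs I L (v * d) = List.replicate (outs cs I L (v * d)).length a ∧
    (outs cs I L (v * d)).length =
      ((cs.leftInvSeq L).map (MulAut.conj (v * d))).countP (fun x => open Classical in decide (x = cs.simple a)) := by
  classical
  induction L generalizing d with
  | nil => simp [outs]
  | cons r L ih =>
    have hr : r ∈ J := hL r (by simp)
    have hL' : ∀ r ∈ L, r ∈ J := fun x hx => hL x (by simp [hx])
    rw [outs, CoxeterSystem.leftInvSeq, List.map_cons, List.countP_cons, List.map_map]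
    by_cases h : ∃ a ∈ I, v * d * cs.simple r = cs.simple a * (v * d)
    · obtain ⟨b, hb, h⟩ := h
      have hba := H d hd r hr b hb h
      subst hba
      have hs := step_out cs I (v * d) r b hb h
      obtain ⟨i1, i2⟩ := ih hL' d hd
      rw [hs.1, hs.2]
      refine ⟨?_, ?_⟩
      · rw [List.singleton_append, List.length_cons, List.replicate_succ, ← i1]
      · rw [List.singleton_append, List.length_cons, i2]
        have e1 : MulAut.conj (v * d) (cs.simple r) = cs.simple b := by
          rw [MulAut.conj_apply, h]; group
        rw [e1]
        simp only [decide_true, if_true]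
        congr 1
        rw [List.countP_map, List.countP_map]
        apply List.countP_congr
        intro x _
        simp only [Function.comp, decide_eq_true_eq]
        have e2 : MulAut.conj (v * d) (MulAut.conj (cs.simple r) x) =
            MulAut.conj (cs.simple b) (MulAut.conj (v * d) x) := by
          rw [← MulAut.mul_apply, ← map_mul, h, map_mul _ (cs.simple b) (v * d), MulAut.mul_apply]
        rw [e2]
        generalize MulAut.conj (v * d) x = y
        rw [MulAut.conj_apply, mul_inv_eq_iff_eq_mul, mul_right_inj]
    · have hs := step_no cs I (v * d) r h
      obtain ⟨i1, i2⟩ := ih hL' (d * cs.simple r) (hd.mul cs (JW.simple cs hr))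
      rw [hs.1, hs.2, mul_assoc]
      refine ⟨i1, ?_⟩
      rw [List.nil_append, i2]
      have e1 : ¬ (MulAut.conj (v * d) (cs.simple r) = cs.simple a) := by
        intro e
        apply h
        refine ⟨a, ha, ?_⟩
        rw [MulAut.conj_apply, mul_inv_eq_iff_eq_mul] at e
        exact e
      simp only [e1, decide_false]
      simp only [Bool.false_eq_true, if_false, add_zero]
      congr 2
      funext x
      rw [Function.comp, ← mul_assoc, ← MulAut.mul_apply, ← map_mul]

/-- Runs without outputs. -/
theorem run_none (I J : Set B) (v : W)
    (H : ∀ d, JW cs J d → ∀ r ∈ J, ∀ b ∈ I,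
      ¬ v * d * cs.simple r = cs.simple b * (v * d))
    (L : List B) (hL : ∀ r ∈ L, r ∈ J) (d : W) (hd : JW cs J d) :
    outs cs I L (v * d) = [] := by
  induction L generalizing d with
  | nil => simp [outs]
  | cons r L ih =>
    have hr : r ∈ J := hL r (by simp)
    have hs := step_no cs I (v * d) r (by push Not; exact H d hd r hr)
    rw [outs, hs.1, hs.2, mul_assoc, ih (fun x hx => hL x (by simp [hx])) _ (hd.mul cs (JW.simple cs hr))]
    rfl

/-- Runs where everything is output. -/
theorem run_all (I : Set B) (v : W) (s t a b : B) (ha : a ∈ I) (hb : b ∈ I)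
    (h1 : v * cs.simple s = cs.simple a * v) (h2 : v * cs.simple t = cs.simple b * v) (n : ℕ) :
    fin cs I (altWord s t n) v = v ∧ outs cs I (altWord s t n) v = altWord a b n := by
  induction n generalizing s t a b with
  | zero => exact ⟨rfl, rfl⟩
  | succ n ih =>
    have hs := step_out cs I v s a ha h1
    have := ih t s b a hb ha h2 h1
    refine ⟨by simp only [altWord, fin, hs.1, this.1], ?_⟩
    simp only [altWord, outs, hs.1, hs.2, this.2]
    rfl

theorem fin_eq_of_outs_eq (I : Set B) (L K : List B) (w : W) (h : outs cs I L w = outs cs I K w)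
    (hp : cs.wordProd L = cs.wordProd K) : fin cs I L w = fin cs I K w := by
  have h1 := fin_outs cs I L w
  have h2 := fin_outs cs I K w
  rw [hp, h2, h] at h1
  exact (mul_left_cancel h1).symm

theorem prod_alt (s t : B) : cs.wordProd (altWord s t (M s t)) = cs.wordProd (altWord t s (M s t)) := by
  have h : ∀ (s t : B) (n : ℕ), cs.wordProd (altWord s t n) = cs.wordProd (if Even n then
      CoxeterSystem.alternatingWord s t n else CoxeterSystem.alternatingWord t s n) := by
    intro s t n
    induction n generalizing s t with
    | zero => rfl
    | succ n ih =>
      rw [altWord, cs.wordProd_cons, ih, CoxeterSystem.alternatingWord_succ',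
        CoxeterSystem.alternatingWord_succ']
      by_cases hn : Even n
      · have hn' : ¬ Even (n + 1) := by simpa [Nat.even_add_one] using hn
        simp only [if_pos hn, if_neg hn', cs.wordProd_cons]
      · have hn' : Even (n + 1) := by simpa [Nat.even_add_one] using hn
        simp only [if_neg hn, if_pos hn', cs.wordProd_cons]
  have hb := cs.wordProd_braidWord_eq s t
  unfold CoxeterSystem.braidWord at hb
  rw [M.symmetric t s] at hb
  rw [h, h]
  split_ifs
  · exact hb
  · exact hb.symm

theorem braid_run (I : Set B) (s t : B) (hst : s ≠ t) (hm : M s t ≠ 0) (w : W) (hw : Xmin cs I w) :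
    fin cs I (altWord s t (M s t)) w = fin cs I (altWord t s (M s t)) w ∧
    braidCon M (FreeMonoid.ofList (outs cs I (altWord s t (M s t)) w))
      (FreeMonoid.ofList (outs cs I (altWord t s (M s t)) w)) := by
  classical
  suffices hS : (outs cs I (altWord s t (M s t)) w = outs cs I (altWord t s (M s t)) w) ∨
      (fin cs I (altWord s t (M s t)) w = fin cs I (altWord t s (M s t)) w ∧
    braidCon M (FreeMonoid.ofList (outs cs I (altWord s t (M s t)) w))
      (FreeMonoid.ofList (outs cs I (altWord t s (M s t)) w))) by
    rcases hS with h | h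
    · refine ⟨fin_eq_of_outs_eq cs I _ _ w h (prod_alt cs s t), ?_⟩
      rw [h]
      exact (braidCon M).refl _
    · exact h
  set J : Set B := {s, t} with hJ
  have hJs : s ∈ J := by simp [hJ]
  have hJt : t ∈ J := by simp [hJ]
  -- minimal representative
  obtain ⟨v, d, hd, rfl, hv⟩ : ∃ v d, JW cs J d ∧ w = v * d ∧
      ∀ d, JW cs J d → cs.length v ≤ cs.length (v * d) := by
    have hne : ∃ n, ∃ d, JW cs J d ∧ cs.length (w * d) = n := ⟨_, 1, JW.one cs, rfl⟩
    obtain ⟨d, hd, hn⟩ := Nat.find_spec hne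
    refine ⟨w * d, d⁻¹, hd.inv cs, by group, ?_⟩
    intro e he
    rw [hn, mul_assoc]
    exact Nat.find_min' hne ⟨d * e, hd.mul cs he, rfl⟩
  obtain ⟨L₀, hL₀, hL₀d⟩ := hd
  obtain ⟨L, hL, hLd, hlen⟩ := len_add cs J v hv L₀ hL₀
  rw [hL₀d] at hLd hlen
  subst hLd
  have hd : JW cs J (cs.wordProd L) := ⟨L, hL, rfl⟩
  have hvX : Xmin cs I v := by
    intro a ha
    have h1 := hw a ha
    rw [hlen, ← mul_assoc] at h1
    have h2 := cs.length_mul_le (cs.simple a * v) (cs.wordProd L)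
    have h3 := cs.length_wordProd_le L
    omega
  have hA : ∀ n, ∀ r ∈ altWord s t n, r ∈ J := fun n r hr => by simpa [hJ] using alt_mem s t n r hr
  have hA' : ∀ n, ∀ r ∈ altWord t s n, r ∈ J := fun n r hr => by
    simpa [hJ, or_comm] using alt_mem t s n r hr
  -- location of the outputs
  have F1 : ∀ d, JW cs J d → ∀ r ∈ J, ∀ b ∈ I,
      v * d * cs.simple r = cs.simple b * (v * d) → ∃ q ∈ J, v * cs.simple q = cs.simple b * v := by
    intro d hd r hr b hb h
    obtain ⟨K, hK, hKd⟩ := (hd.mul cs (JW.simple cs hr)).mul cs (hd.inv cs)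
    obtain ⟨K', hK', hKe, hl⟩ := len_add cs J v hv K hK
    have h1 : v * cs.wordProd K = cs.simple b * v := by
      rw [hKd, ← mul_assoc, ← mul_assoc, h]; group
    rw [h1] at hl
    have h2 := hvX b hb
    have h3 := cs.length_simple_mul v b
    obtain ⟨q, rfl⟩ := List.length_eq_one_iff.1 (show K'.length = 1 by omega)
    refine ⟨q, hK' q (by simp), ?_⟩
    rw [← h1, ← hKe]; simp
  by_cases hc1 : ∃ a ∈ I, v * cs.simple s = cs.simple a * v
  · obtain ⟨a, ha, h1⟩ := hc1
    by_cases hc2 : ∃ b ∈ I, v * cs.simple t = cs.simple b * v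
    · obtain ⟨b, hb, h2⟩ := hc2
      right
      have hLnil : L = [] := by
        cases L with
        | nil => rfl
        | cons r L =>
          exfalso
          have : ∃ c ∈ I, v * cs.simple r = cs.simple c * v := by
            rcases hL r (by simp) with h | h
            · rw [h]; exact ⟨a, ha, h1⟩
            · rw [Set.mem_singleton_iff.1 h]; exact ⟨b, hb, h2⟩
          obtain ⟨c, hc, h3⟩ := this
          have h4 := hw c hc
          rw [hlen, cs.wordProd_cons, ← mul_assoc v, h3] at h4
          simp only [mul_assoc, cs.simple_mul_simple_cancel_left] at h4
          have h5 := cs.length_mul_le v (cs.wordProd L)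
          have h6 := cs.length_wordProd_le L
          simp at h4
          omega
      subst hLnil
      rw [cs.wordProd_nil, mul_one]
      have r1 := run_all cs I v s t a b ha hb h1 h2 (M s t)
      have r2 := run_all cs I v t s b a hb ha h2 h1 (M s t)
      refine ⟨by rw [r1.1, r2.1], ?_⟩
      rw [r1.2, r2.2]
      have hab : a ≠ b := by
        rintro rfl
        rw [← h2] at h1
        exact hst (simple_inj cs (mul_left_cancel h1))
      have hconj : MulAut.conj v (cs.simple s * cs.simple t) = cs.simple a * cs.simple b := by
        rw [MulAut.conj_apply, ← mul_assoc, h1, mul_assoc (cs.simple a), h2]; group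
      have hMM : M a b = M s t := by
        apply Nat.dvd_antisymm
        · apply dvd_of_pow cs a b hab
          rw [← hconj, ← map_pow, cs.simple_mul_simple_pow, map_one]
        · apply dvd_of_pow cs s t hst
          apply (MulAut.conj v).injective
          rw [map_pow, hconj, cs.simple_mul_simple_pow, map_one]
      rw [← hMM]
      exact ConGen.Rel.of _ _ ⟨a, b, hab, by rw [hMM]; exact hm, rfl, rfl⟩
    · left
      have H : ∀ d, JW cs J d → ∀ r ∈ J, ∀ b ∈ I,
          v * d * cs.simple r = cs.simple b * (v * d) → b = a := by
        intro d hd r hr b hb h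
        obtain ⟨q, hq, h3⟩ := F1 d hd r hr b hb h
        rcases hq with rfl | hq
        · rw [h1] at h3
          exact (simple_inj cs (mul_right_cancel h3)).symm
        · rw [Set.mem_singleton_iff.1 hq] at h3
          exact absurd ⟨b, hb, h3⟩ hc2
      have r1 := run_single cs I J v a ha H _ (hA (M s t)) _ hd
      have r2 := run_single cs I J v a ha H _ (hA' (M s t)) _ hd
      rw [r1.1, r2.1, r1.2, r2.2]
      rw [((lis_alt_perm cs s t).map _).countP_eq]
  · by_cases hc2 : ∃ b ∈ I, v * cs.simple t = cs.simple b * v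
    · left
      obtain ⟨a, ha, h1⟩ := hc2
      have H : ∀ d, JW cs J d → ∀ r ∈ J, ∀ b ∈ I,
          v * d * cs.simple r = cs.simple b * (v * d) → b = a := by
        intro d hd r hr b hb h
        obtain ⟨q, hq, h3⟩ := F1 d hd r hr b hb h
        rcases hq with rfl | hq
        · exact absurd ⟨b, hb, h3⟩ hc1
        · rw [Set.mem_singleton_iff.1 hq, h1] at h3
          exact (simple_inj cs (mul_right_cancel h3)).symm
      have r1 := run_single cs I J v a ha H _ (hA (M s t)) _ hd
      have r2 := run_single cs I J v a ha H _ (hA' (M s t)) _ hd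
      rw [r1.1, r2.1, r1.2, r2.2]
      rw [((lis_alt_perm cs s t).map _).countP_eq]
    · left
      have H : ∀ d, JW cs J d → ∀ r ∈ J, ∀ b ∈ I,
          ¬ v * d * cs.simple r = cs.simple b * (v * d) := by
        intro d hd r hr b hb h
        obtain ⟨q, hq, h3⟩ := F1 d hd r hr b hb h
        rcases hq with rfl | hq
        · exact hc1 ⟨b, hb, h3⟩
        · rw [Set.mem_singleton_iff.1 hq] at h3
          exact hc2 ⟨b, hb, h3⟩
      rw [run_none cs I J v H _ (hA (M s t)) _ hd, run_none cs I J v H _ (hA' (M s t)) _ hd]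

/-- The congruence of words having the same runs. -/
def runCon (I : Set B) : Con (FreeMonoid B) where
  r a b := ∀ w, Xmin cs I w → fin cs I a.toList w = fin cs I b.toList w ∧
    braidCon M (FreeMonoid.ofList (outs cs I a.toList w)) (FreeMonoid.ofList (outs cs I b.toList w))
  iseqv := ⟨fun _ _ _ => ⟨rfl, (braidCon M).refl _⟩,
    fun h w hw => ⟨(h w hw).1.symm, (braidCon M).symm (h w hw).2⟩,
    fun h h' w hw => ⟨(h w hw).1.trans (h' w hw).1, (braidCon M).trans (h w hw).2 (h' w hw).2⟩⟩
  mul' := by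
    intro a b c d h h' w hw
    rw [FreeMonoid.toList_mul, FreeMonoid.toList_mul, fin_append, fin_append, outs_append,
      outs_append, FreeMonoid.ofList_append, FreeMonoid.ofList_append, (h w hw).1]
    have h2 := h' _ (fin_X cs I b.toList w hw)
    exact ⟨h2.1, (braidCon M).mul (h w hw).2 h2.2⟩

theorem braid_le_run (I : Set B) : braidCon M ≤ runCon cs I := by
  apply Con.conGen_le.2
  rintro a b ⟨s, t, hst, hm, rfl, rfl⟩ w hw
  exact braid_run cs I s t hst hm w hw

/-- The class of a word. -/
def mkW (M : CoxeterMatrix B) (L : List B) : ArtinTitsMonoid M :=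
  (braidCon M).mk' (FreeMonoid.ofList L)

theorem mkW_append (L K : List B) : mkW M (L ++ K) = mkW M L * mkW M K :=
  map_mul (braidCon M).mk' (FreeMonoid.ofList L) (FreeMonoid.ofList K)

theorem mkW_surj (x : ArtinTitsMonoid M) : ∃ L, mkW M L = x := by
  obtain ⟨a, ha⟩ := (braidCon M).mk'_surjective x
  exact ⟨a.toList, ha⟩

theorem mkW_eq {L K : List B} :
    mkW M L = mkW M K ↔ braidCon M (FreeMonoid.ofList L) (FreeMonoid.ofList K) :=
  (braidCon M).eq

theorem mkW_mem (I : Set B) (L : List B) (hL : ∀ a ∈ L, a ∈ I) :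
    mkW M L ∈ Submonoid.closure (ArtinTitsMonoid.of M '' I) := by
  induction L with
  | nil => exact Submonoid.one_mem _
  | cons r L ih =>
    rw [← List.singleton_append, mkW_append]
    exact Submonoid.mul_mem _ (Submonoid.subset_closure ⟨r, hL r (by simp), rfl⟩)
      (ih fun a ha => hL a (by simp [ha]))

theorem mem_mkW (I : Set B) (x : ArtinTitsMonoid M)
    (hx : x ∈ Submonoid.closure (ArtinTitsMonoid.of M '' I)) :
    ∃ L : List B, (∀ a ∈ L, a ∈ I) ∧ mkW M L = x := by
  induction hx using Submonoid.closure_induction with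
  | mem x hx =>
    obtain ⟨r, hr, rfl⟩ := hx
    exact ⟨[r], by simpa using hr, rfl⟩
  | one => exact ⟨[], by simp, rfl⟩
  | mul x y _ _ hx hy =>
    obtain ⟨L, hL, rfl⟩ := hx
    obtain ⟨K, hK, rfl⟩ := hy
    refine ⟨L ++ K, ?_, mkW_append L K⟩
    intro a ha
    rcases List.mem_append.1 ha with h | h
    · exact hL a h
    · exact hK a h

/-- The congruence of words having the same letters. -/
def suppCon (B : Type*) : Con (FreeMonoid B) where
  r a b := ∀ r, r ∈ a.toList ↔ r ∈ b.toList
  iseqv := ⟨fun _ _ => Iff.rfl, fun h r => (h r).symm, fun h h' r => (h r).trans (h' r)⟩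
  mul' := by
    intro a b c d h h' r
    simp only [FreeMonoid.toList_mul, List.mem_append, h r, h' r]

theorem mem_alt (s t : B) (n : ℕ) (hn : 2 ≤ n) (r : B) : r ∈ altWord s t n ↔ r = s ∨ r = t := by
  refine ⟨alt_mem s t n r, ?_⟩
  obtain ⟨k, rfl⟩ : ∃ k, n = k + 1 + 1 := ⟨n - 2, by omega⟩
  rintro (h | h) <;> simp [altWord, h]

theorem braid_le_supp : braidCon M ≤ suppCon B := by
  apply Con.conGen_le.2
  rintro a b ⟨s, t, hst, hm, rfl, rfl⟩ r
  have h1 := M.off_diagonal s t hst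
  have h2 : 2 ≤ M s t := by
    have : M s t ≠ 1 := h1
    omega
  change r ∈ altWord s t (M s t) ↔ r ∈ altWord t s (M s t)
  rw [mem_alt s t _ h2, mem_alt t s _ h2, or_comm]

theorem left_factor_mem (I : Set B) (l k : ArtinTitsMonoid M)
    (h : l * k ∈ Submonoid.closure (ArtinTitsMonoid.of M '' I)) :
    l ∈ Submonoid.closure (ArtinTitsMonoid.of M '' I) := by
  obtain ⟨L, hL, he⟩ := mem_mkW I _ h
  obtain ⟨P, rfl⟩ := mkW_surj l
  obtain ⟨Q, rfl⟩ := mkW_surj k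
  rw [← mkW_append, mkW_eq] at he
  have hs := braid_le_supp he
  apply mkW_mem
  intro a ha
  exact hL a ((hs a).2 (List.mem_append.2 (Or.inl ha)))

theorem common (cs : CoxeterSystem M W) (I : Set B) (x y : ArtinTitsMonoid M)
    (hx : x ∈ Submonoid.closure (ArtinTitsMonoid.of M '' I))
    (hy : y ∈ Submonoid.closure (ArtinTitsMonoid.of M '' I))
    (u v : ArtinTitsMonoid M) (h : x * u = y * v) :
    ∃ m ∈ Submonoid.closure (ArtinTitsMonoid.of M '' I),
      (∃ u, m = x * u) ∧ (∃ v, m = y * v) := by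
  obtain ⟨X, hX, rfl⟩ := mem_mkW I _ hx
  obtain ⟨Y, hY, rfl⟩ := mem_mkW I _ hy
  obtain ⟨U, rfl⟩ := mkW_surj u
  obtain ⟨V, rfl⟩ := mkW_surj v
  rw [← mkW_append, ← mkW_append, mkW_eq] at h
  have hr := (braid_le_run cs I h 1 (Xmin_one cs I)).2
  rw [← mkW_eq] at hr
  change mkW M (outs cs I (X ++ U) 1) = mkW M (outs cs I (Y ++ V) 1) at hr
  refine ⟨_, mkW_mem I _ (outs_mem cs I (X ++ U) 1), ?_, ?_⟩
  · rw [outs_append, (run_one cs I X hX).2, mkW_append]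
    exact ⟨_, rfl⟩
  · rw [hr, outs_append, (run_one cs I Y hY).2, mkW_append]
    exact ⟨_, rfl⟩

end main
end AT

/-- In the Artin–Tits monoid of a Coxeter system `(W, S)`, if two elements of the parabolic
submonoid `B_I⁺` have a common right multiple, then they have a common right multiple in
`B_I⁺`; moreover every right lcm of them lies in `B_I⁺`. -/
theorem artin_parabolic_submonoid_closed_under_right_lcm
    {B : Type*} (M : CoxeterMatrix B) {W : Type*} [Group W] (cs : CoxeterSystem M W)
    (I : Set B) (x y : ArtinTitsMonoid M)
    (hx : x ∈ Submonoid.closure (ArtinTitsMonoid.of M '' I))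
    (hy : y ∈ Submonoid.closure (ArtinTitsMonoid.of M '' I))
    (hcm : ∃ m : ArtinTitsMonoid M, (∃ u, m = x * u) ∧ (∃ v, m = y * v)) :
    (∃ m ∈ Submonoid.closure (ArtinTitsMonoid.of M '' I),
      (∃ u, m = x * u) ∧ (∃ v, m = y * v)) ∧
    (∀ l : ArtinTitsMonoid M,
      ((∃ u, l = x * u) ∧ (∃ v, l = y * v) ∧
        ∀ m : ArtinTitsMonoid M, (∃ u, m = x * u) → (∃ v, m = y * v) → ∃ w, m = l * w) →
      l ∈ Submonoid.closure (ArtinTitsMonoid.of M '' I)) := by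
  obtain ⟨m, ⟨u, hu⟩, ⟨v, hv⟩⟩ := hcm
  obtain ⟨n, hn, hxn, hyn⟩ := AT.common cs I x y hx hy u v (hu.symm.trans hv)
  refine ⟨⟨n, hn, hxn, hyn⟩, ?_⟩
  rintro l ⟨-, -, hl⟩
  obtain ⟨k, hk⟩ := hl n hxn hyn
  apply AT.left_factor_mem I l k
  rw [← hk]
  exact hn
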